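/- arXiv:0809.3011 — 2 statements merged into one kernel-verified Lean document; each statement's English description precedes it below -/
import Mathlib

section
/- Suppose the σ-algebra Σ, viewed as a metric space under the distance ρ(A,B) = arctan(μ((A \ B) ∪ (B \ A))), is separable. Then the subspace G^o(ψ) of G(ψ), consisting of all f with ‖f‖_{L^p(μ)}/ψ(p) → 0 as ψ(p) → ∞, is a separable normed space under the norm ‖·‖_{G(ψ)}. -/
/-!
Fatou's lemma and log-convexity of `p ↦ ‖f‖_p ^ p` reduce the supremum of `‖f‖_p` over a bounded
set `P ⊆ [1, ∞)` of exponents to the two endpoint norms: a function whose norms are bounded on `P`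
lies in `L^(inf P) ∩ L^(sup P)`, and `‖f‖_p ≤ max ‖f‖_(inf P) ‖f‖_(sup P)` on `P`. As a subset of
the second countable space `L^(inf P) × L^(sup P)`, any family of such functions is separable for
`sup_{p ∈ P} ‖·‖_p`.

Given `ε`, each `f ∈ G^o(ψ)` has `‖f‖_p / ψ p ≤ ε / 2` as soon as `n ≤ ψ p`, for some natural `n`.
Two functions sharing this `n` are `ε`-close in `G(ψ)` once they are so on `{ψ < n}`, which is a
bounded set of exponents because `ψ → ∞` at `b`. Countably many `n` together give a countable
`ε`-net of `G^o(ψ)` inside `G^o(ψ)`.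
-/

noncomputable section

open MeasureTheory Filter Set Topology
open scoped ENNReal NNReal

/-- The set of exponents `p` with `a < p < b` (where `b : ℝ≥0∞` may be `∞`). -/
def expSet (a : ℝ) (b : ℝ≥0∞) : Set ℝ := {p : ℝ | a < p ∧ ENNReal.ofReal p < b}

/-- The filter of real exponents `p` tending to `b` from below (`p → b⁻`);
when `b = ∞` this amounts to `p → ∞`. -/
def atBbelow (b : ℝ≥0∞) : Filter ℝ :=
  Filter.comap ENNReal.ofReal (nhdsWithin b (Set.Iio b))

/-- The class `EΨ(a,b)`: continuous `ψ` on `(a,b)` with `ψ(p) ≥ 1` and `ψ(b-0) = ∞`. -/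
def IsEPsi (a : ℝ) (b : ℝ≥0∞) (ψ : ℝ → ℝ) : Prop :=
  ContinuousOn ψ (expSet a b) ∧ (∀ p ∈ expSet a b, 1 ≤ ψ p) ∧
    Filter.Tendsto ψ (atBbelow b) Filter.atTop

/-- Norm of the Bilateral Grand Lebesgue space `G(ψ; a, b)` over a measure `μ`:
`‖f‖_{G(ψ)} = sup_{p ∈ (a,b)} ‖f‖_{L^p(μ)} / ψ(p)`, with values in `ℝ≥0∞`. -/
def GNorm {α : Type*} [MeasurableSpace α] (μ : Measure α) (a : ℝ) (b : ℝ≥0∞)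
    (ψ : ℝ → ℝ) (f : α → ℝ) : ℝ≥0∞ :=
  ⨆ p ∈ expSet a b, eLpNorm f (ENNReal.ofReal p) μ / ENNReal.ofReal (ψ p)

/-- The class `Ψ(a,b)` (relative to a measure `μ`): positive continuous `ψ` on `(a,b)`
with `ψ(b-0) = ∞`, admitting a representation `ψ(p) = ‖f‖_{L^p(μ)}` for `p ∈ (a,b)`, where
the measurable `f` lies in `L^p(μ)` for all `p ∈ (a,b)`. -/
def IsPsi {α : Type*} [MeasurableSpace α] (μ : Measure α) (a : ℝ) (b : ℝ≥0∞)
    (ψ : ℝ → ℝ) : Prop :=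
  ContinuousOn ψ (expSet a b) ∧ (∀ p ∈ expSet a b, 0 < ψ p) ∧
    Filter.Tendsto ψ (atBbelow b) Filter.atTop ∧
    ∃ f : α → ℝ, AEStronglyMeasurable f μ ∧
      ∀ p ∈ expSet a b, eLpNorm f (ENNReal.ofReal p) μ = ENNReal.ofReal (ψ p)

/-- The fundamental function `φ(G(ψ;a,b), s) = sup_{p ∈ (a,b)} s^{1/p}/ψ(p)`, real-valued. -/
def fundR (a : ℝ) (b : ℝ≥0∞) (ψ : ℝ → ℝ) (s : ℝ) : ℝ :=
  ⨆ p : expSet a b, s ^ (1 / (p : ℝ)) / ψ p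

/-- The fundamental function `φ(G(ψ;a,b), δ) = sup_{p ∈ (a,b)} δ^{1/p}/ψ(p)`, `ℝ≥0∞`-valued. -/
def fundE (a : ℝ) (b : ℝ≥0∞) (ψ : ℝ → ℝ) (δ : ℝ≥0∞) : ℝ≥0∞ :=
  ⨆ p ∈ expSet a b, δ ^ (1 / p) / ENNReal.ofReal (ψ p)

/-- The defining condition of the subspace `G^o(ψ)` of `G(ψ)`:
`‖f‖_{L^p(μ)}/ψ(p) → 0` as `ψ(p) → ∞`. -/
def GoCond {α : Type*} [MeasurableSpace α] (μ : Measure α) (a : ℝ) (b : ℝ≥0∞)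
    (ψ : ℝ → ℝ) (f : α → ℝ) : Prop :=
  ∀ ε : ℝ, 0 < ε → ∃ M : ℝ, ∀ p ∈ expSet a b, M ≤ ψ p →
    eLpNorm f (ENNReal.ofReal p) μ / ENNReal.ofReal (ψ p) < ENNReal.ofReal ε

/-- The distance `ρ(A,B) = arctan μ((A \ B) ∪ (B \ A))` on the σ-algebra `Σ`
(with `arctan ∞ = π/2`). -/
def rhoDist {α : Type*} [MeasurableSpace α] (μ : Measure α) (A B : Set α) : ℝ :=
  if μ ((A \ B) ∪ (B \ A)) = ⊤ then Real.pi / 2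
  else Real.arctan (μ ((A \ B) ∪ (B \ A))).toReal

section Lebesgue

variable {α E : Type*} [MeasurableSpace α] [NormedAddCommGroup E] {μ : Measure α}

theorem continuousAt_ennreal_const_rpow (x : ℝ≥0∞) {p : ℝ} (hp : 0 < p) :
    ContinuousAt (fun q : ℝ => x ^ q) p := by
  induction x with
  | top =>
    refine continuousAt_const (y := ∞) |>.congr ?_
    filter_upwards [lt_mem_nhds hp] with q hq using (ENNReal.top_rpow_of_pos hq).symm
  | coe x =>
    have hx : ContinuousAt (fun q : ℝ => ((x ^ q : ℝ≥0) : ℝ≥0∞)) p :=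
      ENNReal.tendsto_coe.2 (tendsto_const_nhds.nnrpow tendsto_id (.inr hp))
    refine hx.congr ?_
    filter_upwards [lt_mem_nhds hp] with q hq using ENNReal.coe_rpow_of_nonneg x hq.le

theorem eLpNorm_ofReal_rpow (f : α → E) {p : ℝ} (hp : 0 < p) :
    eLpNorm f (ENNReal.ofReal p) μ ^ p = ∫⁻ x, ‖f x‖ₑ ^ p ∂μ := by
  lift p to ℝ≥0 using hp.le
  rw [ENNReal.ofReal_coe_nnreal]
  exact eLpNorm_nnreal_pow_eq_lintegral (NNReal.coe_pos.1 hp).ne'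

theorem eLpNorm_ofReal_le_of_mem_closure {f : α → E} (hf : AEStronglyMeasurable f μ)
    {P : Set ℝ} {K : ℝ≥0∞} (hK : ∀ q ∈ P, eLpNorm f (ENNReal.ofReal q) μ ≤ K)
    {p : ℝ} (hp : 0 < p) (hpP : p ∈ closure P) : eLpNorm f (ENNReal.ofReal p) μ ≤ K := by
  have : (𝓝[P] p).NeBot := mem_closure_iff_nhdsWithin_neBot.1 hpP
  have tendsto_rpow (x : ℝ≥0∞) : Tendsto (x ^ · : ℝ → ℝ≥0∞) (𝓝[P] p) (𝓝 (x ^ p)) :=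
    (continuousAt_ennreal_const_rpow x hp).mono_left nhdsWithin_le_nhds
  have hle : ∀ᶠ q in 𝓝[P] p, ∫⁻ x, ‖f x‖ₑ ^ q ∂μ ≤ K ^ q := by
    filter_upwards [self_mem_nhdsWithin, nhdsWithin_le_nhds (lt_mem_nhds hp)] with q hqP hq
    rw [← eLpNorm_ofReal_rpow f hq]
    exact ENNReal.rpow_le_rpow (hK q hqP) hq.le
  rw [← ENNReal.rpow_le_rpow_iff hp]
  calc eLpNorm f (ENNReal.ofReal p) μ ^ p
      = ∫⁻ x, liminf (fun q : ℝ => ‖f x‖ₑ ^ q) (𝓝[P] p) ∂μ := by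
        simp only [eLpNorm_ofReal_rpow f hp, (tendsto_rpow _).liminf_eq]
    _ ≤ liminf (fun q : ℝ => ∫⁻ x, ‖f x‖ₑ ^ q ∂μ) (𝓝[P] p) :=
        lintegral_liminf_le' fun q => hf.enorm.pow_const q
    _ ≤ liminf (fun q : ℝ => K ^ q) (𝓝[P] p) := liminf_le_liminf hle
    _ = K ^ p := (tendsto_rpow K).liminf_eq

theorem eLpNorm_ofReal_le_max_of_mem_Icc {f : α → E} (hf : AEStronglyMeasurable f μ)
    {p q r : ℝ} (hq : 0 < q) (hp : p ∈ Icc q r) :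
    eLpNorm f (ENNReal.ofReal p) μ ≤
      max (eLpNorm f (ENNReal.ofReal q) μ) (eLpNorm f (ENNReal.ofReal r) μ) := by
  have hp₀ : 0 < p := hq.trans_le hp.1
  have hr : 0 < r := hp₀.trans_le hp.2
  obtain ⟨s, t, hs, ht, hst, hstp⟩ : p ∈ segment ℝ q r := Icc_subset_segment hp
  simp only [smul_eq_mul] at hstp
  have rpow_split (x : ℝ≥0∞) : x ^ p = (x ^ q) ^ s * (x ^ r) ^ t := by
    rw [← ENNReal.rpow_mul, ← ENNReal.rpow_mul, ← ENNReal.rpow_add_of_nonneg _ _ (by positivity)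
      (by positivity), mul_comm q, mul_comm r, hstp]
  rw [← ENNReal.rpow_le_rpow_iff hp₀, rpow_split (max _ _)]
  calc eLpNorm f (ENNReal.ofReal p) μ ^ p
      = ∫⁻ x, (‖f x‖ₑ ^ q) ^ s * (‖f x‖ₑ ^ r) ^ t ∂μ := by
        simp only [eLpNorm_ofReal_rpow f hp₀, rpow_split]
    _ ≤ (∫⁻ x, ‖f x‖ₑ ^ q ∂μ) ^ s * (∫⁻ x, ‖f x‖ₑ ^ r ∂μ) ^ t :=
        ENNReal.lintegral_mul_norm_pow_le (hf.enorm.pow_const q) (hf.enorm.pow_const r) hs ht hst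
    _ = (eLpNorm f (ENNReal.ofReal q) μ ^ q) ^ s * (eLpNorm f (ENNReal.ofReal r) μ ^ r) ^ t := by
        rw [eLpNorm_ofReal_rpow f hq, eLpNorm_ofReal_rpow f hr]
    _ ≤ _ := by
        gcongr
        · exact le_max_left _ _
        · exact le_max_right _ _

theorem exists_countable_forall_edist_lt {ι X : Type*} [PseudoEMetricSpace X]
    [SecondCountableTopology X] (φ : ι → X) :
    ∃ S : Set ι, S.Countable ∧ ∀ i, ∀ ε > 0, ∃ j ∈ S, edist (φ i) (φ j) < ε := by
  obtain ⟨T, hTc, hTd⟩ := TopologicalSpace.exists_countable_dense (range φ)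
  refine ⟨rangeSplitting φ '' T, hTc.image _, fun i ε hε => ?_⟩
  obtain ⟨y, hyT, hy⟩ := EMetric.mem_closure_iff.1 (hTd ⟨φ i, mem_range_self i⟩) ε hε
  refine ⟨rangeSplitting φ y, mem_image_of_mem _ hyT, ?_⟩
  rwa [apply_rangeSplitting φ y]

variable [IsSeparable μ] [TopologicalSpace.SeparableSpace E] {F : Set (α → E)}

theorem exists_countable_eLpNorm_sub_lt_and_lt {p q : ℝ≥0∞} [Fact (1 ≤ p)] [Fact (p ≠ ∞)]
    [Fact (1 ≤ q)] [Fact (q ≠ ∞)] (hp : ∀ f ∈ F, MemLp f p μ) (hq : ∀ f ∈ F, MemLp f q μ) :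
    ∃ S ⊆ F, S.Countable ∧
      ∀ f ∈ F, ∀ ε > 0, ∃ g ∈ S, eLpNorm (f - g) p μ < ε ∧ eLpNorm (f - g) q μ < ε := by
  obtain ⟨S, hSc, hS⟩ := exists_countable_forall_edist_lt
    fun f : F => ((hp f f.2).toLp, (hq f f.2).toLp)
  refine ⟨(↑) '' S, Subtype.coe_image_subset F S, hSc.image _, fun f hf ε hε => ?_⟩
  obtain ⟨g, hgS, hg⟩ := hS ⟨f, hf⟩ ε hε
  refine ⟨g, mem_image_of_mem _ hgS, ?_⟩
  rwa [Prod.edist_eq, max_lt_iff, Lp.edist_toLp_toLp, Lp.edist_toLp_toLp] at hg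

theorem exists_countable_forall_eLpNorm_sub_lt {P : Set ℝ} (hP₁ : P ⊆ Ici 1) (hPb : BddAbove P)
    (hFm : ∀ f ∈ F, AEStronglyMeasurable f μ)
    (hFb : ∀ f ∈ F, ∃ K < ∞, ∀ p ∈ P, eLpNorm f (ENNReal.ofReal p) μ ≤ K) :
    ∃ S ⊆ F, S.Countable ∧
      ∀ f ∈ F, ∀ ε > 0, ∃ g ∈ S, ∀ p ∈ P, eLpNorm (f - g) (ENNReal.ofReal p) μ < ε := by
  obtain rfl | hP := P.eq_empty_or_nonempty
  · obtain rfl | ⟨f₀, hf₀⟩ := F.eq_empty_or_nonempty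
    · exact ⟨∅, by simp⟩
    · exact ⟨{f₀}, by simpa using hf₀⟩
  have hPbelow : BddBelow P := ⟨1, hP₁⟩
  have one_le {p : ℝ} (hp : p ∈ closure P) : 1 ≤ p := closure_minimal hP₁ isClosed_Ici hp
  have memLp {p : ℝ} (hp : p ∈ closure P) : ∀ f ∈ F, MemLp f (ENNReal.ofReal p) μ := fun f hf =>
    let ⟨_, hK, hfK⟩ := hFb f hf
    ⟨hFm f hf, (eLpNorm_ofReal_le_of_mem_closure (hFm f hf) hfK
      (one_pos.trans_le (one_le hp)) hp).trans_lt hK⟩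
  have hinf : sInf P ∈ closure P := csInf_mem_closure hP hPbelow
  have hsup : sSup P ∈ closure P := csSup_mem_closure hP hPb
  have : Fact (1 ≤ ENNReal.ofReal (sInf P)) := ⟨ENNReal.one_le_ofReal.2 (one_le hinf)⟩
  have : Fact (1 ≤ ENNReal.ofReal (sSup P)) := ⟨ENNReal.one_le_ofReal.2 (one_le hsup)⟩
  have ofReal_ne_top (p : ℝ) : Fact (ENNReal.ofReal p ≠ ∞) := ⟨ENNReal.ofReal_ne_top⟩
  obtain ⟨S, hSF, hSc, hS⟩ := exists_countable_eLpNorm_sub_lt_and_lt (memLp hinf) (memLp hsup)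
  refine ⟨S, hSF, hSc, fun f hf ε hε => ?_⟩
  obtain ⟨g, hgS, hg⟩ := hS f hf ε hε
  refine ⟨g, hgS, fun p hp => ?_⟩
  exact (eLpNorm_ofReal_le_max_of_mem_Icc ((hFm f hf).sub (hFm g (hSF hgS)))
    (one_pos.trans_le (one_le hinf)) ⟨csInf_le hPbelow hp, le_csSup hPb hp⟩).trans_lt
    (max_lt_iff.2 hg)

end Lebesgue

section GrandLebesgue

variable {α : Type*} [MeasurableSpace α] {μ : Measure α} {a : ℝ} {b : ℝ≥0∞} {ψ : ℝ → ℝ}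

/-- The space `G^o(ψ)` as a set of functions: functions that agree almost everywhere are not
identified, so `GNorm` is only a seminorm on it. -/
def goSpace (μ : Measure α) (a : ℝ) (b : ℝ≥0∞) (ψ : ℝ → ℝ) : Set (α → ℝ) :=
  {f | AEStronglyMeasurable f μ ∧ GNorm μ a b ψ f < ⊤ ∧ GoCond μ a b ψ f}

theorem IsEPsi.bddAbove_setOf_lt (hψ : IsEPsi a b ψ) (hab : ENNReal.ofReal a < b) (M : ℝ) :
    BddAbove {p ∈ expSet a b | ψ p < M} := by
  obtain ⟨t, ht, htM⟩ := mem_comap.1 (hψ.2.2.eventually_ge_atTop M)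
  obtain ⟨l, hlb, hlt⟩ := (mem_nhdsLT_iff_exists_Ioo_subset' hab).1 ht
  refine ⟨l.toReal, fun p hp => (ENNReal.ofReal_le_iff_le_toReal hlb.ne_top).1 ?_⟩
  by_contra! hlp
  exact hp.2.not_ge (htM (hlt ⟨hlp, hp.1.2⟩))

theorem eLpNorm_le_GNorm_mul {f : α → ℝ} (hf : GNorm μ a b ψ f ≠ ∞) {p : ℝ}
    (hp : p ∈ expSet a b) :
    eLpNorm f (ENNReal.ofReal p) μ ≤ GNorm μ a b ψ f * ENNReal.ofReal (ψ p) := by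
  rw [← ENNReal.div_le_iff_le_mul (.inr hf) (.inl ENNReal.ofReal_ne_top)]
  exact le_iSup₂ (f := fun p (_ : p ∈ expSet a b) =>
    eLpNorm f (ENNReal.ofReal p) μ / ENNReal.ofReal (ψ p)) p hp

theorem GNorm_sub_le_of_forall_lt_of_forall_le (ha : 1 ≤ a) (hψ : ∀ p ∈ expSet a b, 1 ≤ ψ p)
    {f g : α → ℝ} (hf : AEStronglyMeasurable f μ) (hg : AEStronglyMeasurable g μ)
    {M : ℝ} {ε : ℝ≥0∞}
    (hfg : ∀ p ∈ expSet a b, ψ p < M → eLpNorm (f - g) (ENNReal.ofReal p) μ ≤ ε)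
    (hfM : ∀ p ∈ expSet a b, M ≤ ψ p →
      eLpNorm f (ENNReal.ofReal p) μ / ENNReal.ofReal (ψ p) ≤ ε / 2)
    (hgM : ∀ p ∈ expSet a b, M ≤ ψ p →
      eLpNorm g (ENNReal.ofReal p) μ / ENNReal.ofReal (ψ p) ≤ ε / 2) :
    GNorm μ a b ψ (f - g) ≤ ε := by
  refine iSup₂_le fun p hp => ?_
  obtain hlt | hge := lt_or_ge (ψ p) M
  · have hψp : 1 ≤ ENNReal.ofReal (ψ p) := ENNReal.one_le_ofReal.2 (hψ p hp)
    exact ENNReal.div_le_of_le_mul ((hfg p hp hlt).trans (le_mul_of_one_le_right' hψp))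
  · have hp₁ : 1 ≤ ENNReal.ofReal p := ENNReal.one_le_ofReal.2 (ha.trans hp.1.le)
    calc eLpNorm (f - g) (ENNReal.ofReal p) μ / ENNReal.ofReal (ψ p)
        ≤ (eLpNorm f (ENNReal.ofReal p) μ + eLpNorm g (ENNReal.ofReal p) μ)
            / ENNReal.ofReal (ψ p) := by
          gcongr
          exact eLpNorm_sub_le hf hg hp₁
      _ ≤ ε / 2 + ε / 2 := by
          rw [ENNReal.add_div]
          exact add_le_add (hfM p hp hge) (hgM p hp hge)
      _ = ε := ENNReal.add_halves ε

theorem exists_countable_GNorm_sub_le [IsSeparable μ] (ha : 1 ≤ a)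
    (hψ : ∀ p ∈ expSet a b, 1 ≤ ψ p) (hb : ∀ M, BddAbove {p ∈ expSet a b | ψ p < M})
    {ε : ℝ} (hε : 0 < ε) :
    ∃ S ⊆ goSpace μ a b ψ, S.Countable ∧
      ∀ f ∈ goSpace μ a b ψ, ∃ g ∈ S, GNorm μ a b ψ (f - g) ≤ ENNReal.ofReal ε := by
  let P (n : ℕ) : Set ℝ := {p ∈ expSet a b | ψ p < n}
  let F (n : ℕ) : Set (α → ℝ) := {f ∈ goSpace μ a b ψ | ∀ p ∈ expSet a b, n ≤ ψ p →
    eLpNorm f (ENNReal.ofReal p) μ / ENNReal.ofReal (ψ p) ≤ ENNReal.ofReal ε / 2}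
  have hP₁ (n : ℕ) : P n ⊆ Ici 1 := fun p hp => ha.trans hp.1.1.le
  have hFb (n : ℕ) : ∀ f ∈ F n, ∃ K < ∞, ∀ p ∈ P n, eLpNorm f (ENNReal.ofReal p) μ ≤ K := by
    rintro f ⟨⟨-, hfG, -⟩, -⟩
    refine ⟨GNorm μ a b ψ f * ENNReal.ofReal n, ENNReal.mul_lt_top hfG ENNReal.ofReal_lt_top,
      fun p hp => (eLpNorm_le_GNorm_mul hfG.ne hp.1).trans ?_⟩
    gcongr
    exact hp.2.le
  choose S hSF hSc hS using fun n =>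
    exists_countable_forall_eLpNorm_sub_lt (hP₁ n) (hb n) (fun _ hf => hf.1.1) (hFb n)
  refine ⟨⋃ n, S n, iUnion_subset fun n => (hSF n).trans (sep_subset _ _), countable_iUnion hSc,
    fun f hf => ?_⟩
  obtain ⟨M, hM⟩ := hf.2.2 (ε / 2) (half_pos hε)
  obtain ⟨n, hMn⟩ := exists_nat_ge M
  have hfn : f ∈ F n := ⟨hf, fun p hp hnp => by
    simpa [ENNReal.ofReal_div_of_pos] using (hM p hp (hMn.trans hnp)).le⟩
  obtain ⟨g, hgS, hfg⟩ := hS n f hfn (ENNReal.ofReal ε) (ENNReal.ofReal_pos.2 hε)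
  have hgn : g ∈ F n := hSF n hgS
  exact ⟨g, mem_iUnion_of_mem n hgS, GNorm_sub_le_of_forall_lt_of_forall_le ha hψ hf.1 hgn.1.1
    (fun p hp hlt => (hfg p ⟨hp, hlt⟩).le) hfn.2 hgn.2⟩

theorem Go_separable_general [IsSeparable μ] (ha : 1 ≤ a) (hψ : ∀ p ∈ expSet a b, 1 ≤ ψ p)
    (hb : ∀ M, BddAbove {p ∈ expSet a b | ψ p < M}) :
    ∃ S ⊆ goSpace μ a b ψ, S.Countable ∧ ∀ f ∈ goSpace μ a b ψ, ∀ ε : ℝ, 0 < ε →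
      ∃ g ∈ S, GNorm μ a b ψ (f - g) < ENNReal.ofReal ε := by
  choose S hSG hSc hS using fun n : ℕ =>
    exists_countable_GNorm_sub_le (μ := μ) ha hψ hb (Nat.one_div_pos_of_nat (n := n))
  refine ⟨⋃ n, S n, iUnion_subset hSG, countable_iUnion hSc, fun f hf ε hε => ?_⟩
  obtain ⟨n, hn⟩ := exists_nat_one_div_lt hε
  obtain ⟨g, hgS, hfg⟩ := hS n f hf
  exact ⟨g, mem_iUnion_of_mem n hgS,
    hfg.trans_lt ((ENNReal.ofReal_lt_ofReal_iff hε).2 hn)⟩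

theorem measure_symmDiff_lt_of_rhoDist_lt_arctan {A B : Set α} {δ : ℝ}
    (h : rhoDist μ A B < Real.arctan δ) : μ (symmDiff A B) < ENNReal.ofReal δ := by
  change μ ((A \ B) ∪ (B \ A)) < _
  unfold rhoDist at h
  split_ifs at h with htop
  · exact absurd h (Real.arctan_lt_pi_div_two δ).not_gt
  · exact (ENNReal.lt_ofReal_iff_toReal_lt htop).2 (Real.arctan_lt_arctan_iff.1 h)

theorem measureDense_of_rhoDist {D : Set (Set α)} (hDm : ∀ A ∈ D, MeasurableSet A)
    (hD : ∀ A, MeasurableSet A → ∀ ε : ℝ, 0 < ε → ∃ B ∈ D, rhoDist μ A B < ε) :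
    μ.MeasureDense D where
  measurable := hDm
  approx A hA _ δ hδ :=
    let ⟨B, hB, hAB⟩ := hD A hA (Real.arctan δ) (Real.arctan_pos.2 hδ)
    ⟨B, hB, measure_symmDiff_lt_of_rhoDist_lt_arctan hAB⟩

end GrandLebesgue

/-- **Lemma 2.** Suppose the σ-algebra `Σ`, viewed as a metric space under the
distance `ρ(A,B) = arctan μ((A \ B) ∪ (B \ A))`, is separable. Then the subspace `G^o(ψ)` of
`G(ψ)` — all `f` with `‖f‖_{L^p(μ)}/ψ(p) → 0` as `ψ(p) → ∞` — is separable in the norm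
`‖·‖_{G(ψ)}`, i.e. it contains a countable subset that is dense in it. -/
theorem Go_separable {α : Type*} [MeasurableSpace α] (μ : Measure α) [SigmaFinite μ]
    (a : ℝ) (b : ℝ≥0∞) (ha : 1 ≤ a) (hab : ENNReal.ofReal a < b)
    (ψ : ℝ → ℝ) (hψ : IsEPsi a b ψ)
    (hsep : ∃ D : Set (Set α), D.Countable ∧ (∀ A ∈ D, MeasurableSet A) ∧
      ∀ A : Set α, MeasurableSet A → ∀ ε : ℝ, 0 < ε → ∃ B ∈ D, rhoDist μ A B < ε) :
    ∃ S : Set (α → ℝ), S.Countable ∧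
      (∀ g ∈ S, AEStronglyMeasurable g μ ∧ GNorm μ a b ψ g < ⊤ ∧ GoCond μ a b ψ g) ∧
      ∀ f : α → ℝ, AEStronglyMeasurable f μ → GNorm μ a b ψ f < ⊤ → GoCond μ a b ψ f →
        ∀ ε : ℝ, 0 < ε → ∃ g ∈ S, GNorm μ a b ψ (fun x => f x - g x) < ENNReal.ofReal ε := by
  obtain ⟨D, hDc, hDm, hD⟩ := hsep
  have : IsSeparable μ := ⟨D, hDc, measureDense_of_rhoDist hDm hD⟩
  obtain ⟨S, hSG, hSc, hS⟩ := Go_separable_general (μ := μ) ha hψ.2.1 (hψ.bddAbove_setOf_lt hab)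
  exact ⟨S, hSc, fun _ hg => hSG hg, fun f hf hG hGo => hS f ⟨hf, hG, hGo⟩⟩
end
end

section
/- (Theorem 1.1.B) Let ψ ∈ Ψ(a,b) and ζ, ν ∈ EΨ(a,b) with ζ = ψ·ν. Then for every positive vector s = (s(1),…,s(k)) the operator norm of the dilation operator is exactly ‖σ_s‖(G(ψ) → G(ζ)) = φ(G(ν), s^{d+θ}), where s^{d+θ} = ∏_{r=1}^k s(r)^{d(r)+θ(r)}. -/
noncomputable section

open MeasureTheory Filter Set Topology
open scoped ENNReal NNReal

/-- The space `X = ℝ₊^{d(1)} × ⋯ × ℝ₊^{d(k)}`, modelled as the dependent product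
`∀ r : Fin k, (Fin (d r) → ℝ)`; the restriction to the positive orthant is encoded
in the measure `wMeasure` below. -/
abbrev PiX (k : ℕ) (d : Fin k → ℕ) : Type := ∀ r : Fin k, Fin (d r) → ℝ

/-- The positive orthant of `X`. -/
def orthant (k : ℕ) (d : Fin k → ℕ) : Set (PiX k d) := {x | ∀ r i, 0 < x r i}

/-- The weighted measure `μ(V) = ∫_V W(x) dx` on `X = ℝ₊^{d(1)} × ⋯ × ℝ₊^{d(k)}`. -/
def wMeasure (k : ℕ) (d : Fin k → ℕ) (W : PiX k d → ℝ) : Measure (PiX k d) :=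
  (volume.restrict (orthant k d)).withDensity fun x => ENNReal.ofReal (W x)

/-- The dilation operator `(σ_s f)(x) = f(x(d(1))/s(1), …, x(d(k))/s(k))`. -/
def dilate {k : ℕ} {d : Fin k → ℕ} (s : Fin k → ℝ) (f : PiX k d → ℝ) : PiX k d → ℝ :=
  fun x => f fun r i => x r i / s r

/-- `s^e = ∏_{r=1}^k s(r)^{e(r)}`. -/
def sPow {k : ℕ} (s e : Fin k → ℝ) : ℝ := ∏ r, s r ^ e r

/-- The operator norm `‖σ_s‖(G(ψ) → G(ζ))` of the dilation operator. -/
def dilOpNorm {k : ℕ} {d : Fin k → ℕ} (μ : Measure (PiX k d)) (a : ℝ) (b : ℝ≥0∞)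
    (ψ ζ : ℝ → ℝ) (s : Fin k → ℝ) : ℝ≥0∞ :=
  ⨆ f : {f : PiX k d → ℝ // AEStronglyMeasurable f μ},
    GNorm μ a b ζ (dilate s f.1) / GNorm μ a b ψ f.1

/-! The dilation `σ_s` is composition with `T : x ↦ (x(d(r)) / s(r))_r`, and `T` pushes `μ` forward
to `c • μ` with `c = s^{d+θ}`: Lebesgue measure contributes `s^d` and the homogeneity of the weight
`s^θ`. Hence `‖σ_s f‖_p = c^{1/p} ‖f‖_p`, and since `ζ = ψ ν`,
`‖σ_s f‖_p / ζ(p) = (c^{1/p} / ν(p)) · (‖f‖_p / ψ(p))`.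
The supremum of a product is at most the product of the suprema, which bounds the operator norm by
`φ(G(ν), c)`. For the function representing `ψ` the second factor is identically `1`, so the bound
is attained. -/

section ScalingMap

variable {α β : Type*} [MeasurableSpace α] [MeasurableSpace β] {μ : Measure α} {μ' : Measure β}
  {T : α → β} {c : ℝ≥0∞}

theorem map_withDensity_of_map_eq_smul (hT : MeasurableEmbedding T) (hμ : μ.map T = c • μ')
    {w : α → ℝ≥0∞} {w' : β → ℝ≥0∞} {c' : ℝ≥0∞} (hc' : c' ≠ ∞)
    (hw : ∀ᵐ x ∂μ, w x = c' * w' (T x)) :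
    (μ.withDensity w).map T = (c' * c) • μ'.withDensity w' := by
  ext t ht
  calc (μ.withDensity w).map T t
      = ∫⁻ x in T ⁻¹' t, w x ∂μ := by
        rw [hT.map_apply, withDensity_apply _ (hT.measurable ht)]
    _ = c' * ∫⁻ x in T ⁻¹' t, w' (T x) ∂μ := by
        rw [lintegral_congr_ae (ae_restrict_of_ae hw), lintegral_const_mul' _ _ hc']
    _ = c' * ∫⁻ y in t, w' y ∂(μ.map T) := by
        rw [hT.restrict_map, hT.lintegral_map]
    _ = ((c' * c) • μ'.withDensity w') t := by
        rw [hμ, Measure.restrict_smul, lintegral_smul_measure, Measure.smul_apply,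
          withDensity_apply _ ht, smul_eq_mul, smul_eq_mul, mul_assoc]

theorem eLpNorm_comp_of_map_eq_smul {ε : Type*} [TopologicalSpace ε] [ContinuousENorm ε]
    (hT : AEMeasurable T μ) (hμ : μ.map T = c • μ') {f : β → ε}
    (hf : AEStronglyMeasurable f μ') {p : ℝ≥0∞} (hp : p ≠ ∞) :
    eLpNorm (f ∘ T) p μ = c ^ (1 / p).toReal * eLpNorm f p μ' := by
  rw [← eLpNorm_map_measure (hμ ▸ hf.smul_measure c) hT, hμ,
    eLpNorm_smul_measure_of_ne_top hp, smul_eq_mul]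

variable {a : ℝ} {b : ℝ≥0∞} {ψ ζ ν : ℝ → ℝ} {f : β → ℝ}

theorem eLpNorm_div_le_GNorm {p : ℝ} (hp : p ∈ expSet a b) :
    eLpNorm f (ENNReal.ofReal p) μ' / ENNReal.ofReal (ψ p) ≤ GNorm μ' a b ψ f :=
  le_iSup₂_of_le p hp le_rfl

theorem rpow_div_le_fundE {p : ℝ} (hp : p ∈ expSet a b) :
    c ^ (1 / p) / ENNReal.ofReal (ψ p) ≤ fundE a b ψ c :=
  le_iSup₂_of_le p hp le_rfl

theorem eLpNorm_comp_div_ofReal_mul (hT : AEMeasurable T μ) (hμ : μ.map T = c • μ')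
    (hf : AEStronglyMeasurable f μ') {p u v : ℝ} (hp : 0 < p) (hv : 0 ≤ v) :
    eLpNorm (f ∘ T) (ENNReal.ofReal p) μ / ENNReal.ofReal (u * v) =
      c ^ (1 / p) / ENNReal.ofReal v *
        (eLpNorm f (ENNReal.ofReal p) μ' / ENNReal.ofReal u) := by
  have hexp : (1 / ENNReal.ofReal p).toReal = 1 / p := by
    rw [ENNReal.toReal_div, ENNReal.toReal_one, ENNReal.toReal_ofReal hp.le]
  rw [eLpNorm_comp_of_map_eq_smul hT hμ hf ENNReal.ofReal_ne_top, hexp, ENNReal.ofReal_mul' hv,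
    mul_comm (ENNReal.ofReal u),
    ENNReal.mul_div_mul_comm (.inr ENNReal.ofReal_ne_top) (.inl ENNReal.ofReal_ne_top)]

theorem GNorm_comp_le (hT : AEMeasurable T μ) (hμ : μ.map T = c • μ')
    (hf : AEStronglyMeasurable f μ') (ha : 0 ≤ a) (hν : ∀ p ∈ expSet a b, 0 ≤ ν p)
    (hmul : ∀ p ∈ expSet a b, ζ p = ψ p * ν p) :
    GNorm μ a b ζ (f ∘ T) ≤ fundE a b ν c * GNorm μ' a b ψ f := by
  refine iSup₂_le fun p hp => ?_
  rw [hmul p hp, eLpNorm_comp_div_ofReal_mul hT hμ hf (ha.trans_lt hp.1) (hν p hp)]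
  exact mul_le_mul' (rpow_div_le_fundE hp) (eLpNorm_div_le_GNorm hp)

theorem GNorm_le_one_of_eLpNorm_le
    (hfψ : ∀ p ∈ expSet a b, eLpNorm f (ENNReal.ofReal p) μ' ≤ ENNReal.ofReal (ψ p)) :
    GNorm μ' a b ψ f ≤ 1 :=
  iSup₂_le fun p hp => ENNReal.div_le_of_le_mul ((hfψ p hp).trans_eq (one_mul _).symm)

theorem GNorm_comp_eq_fundE_of_eLpNorm_eq (hT : AEMeasurable T μ) (hμ : μ.map T = c • μ')
    (hf : AEStronglyMeasurable f μ') (ha : 0 ≤ a) (hψ : ∀ p ∈ expSet a b, 0 < ψ p)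
    (hfψ : ∀ p ∈ expSet a b, eLpNorm f (ENNReal.ofReal p) μ' = ENNReal.ofReal (ψ p))
    (hν : ∀ p ∈ expSet a b, 0 ≤ ν p) (hmul : ∀ p ∈ expSet a b, ζ p = ψ p * ν p) :
    GNorm μ a b ζ (f ∘ T) = fundE a b ν c := by
  refine iSup_congr fun p => iSup_congr fun hp => ?_
  rw [hmul p hp, eLpNorm_comp_div_ofReal_mul hT hμ hf (ha.trans_lt hp.1) (hν p hp),
    hfψ p hp, ENNReal.div_self (ENNReal.ofReal_pos.2 (hψ p hp)).ne' ENNReal.ofReal_ne_top,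
    mul_one]

theorem iSup_GNorm_comp_div_GNorm (hT : AEMeasurable T μ) (hμ : μ.map T = c • μ')
    (hf : AEStronglyMeasurable f μ') (ha : 0 ≤ a) (hψ : ∀ p ∈ expSet a b, 0 < ψ p)
    (hfψ : ∀ p ∈ expSet a b, eLpNorm f (ENNReal.ofReal p) μ' = ENNReal.ofReal (ψ p))
    (hν : ∀ p ∈ expSet a b, 0 ≤ ν p) (hmul : ∀ p ∈ expSet a b, ζ p = ψ p * ν p) :
    ⨆ g : {g : β → ℝ // AEStronglyMeasurable g μ'},
      GNorm μ a b ζ (g.1 ∘ T) / GNorm μ' a b ψ g.1 = fundE a b ν c := by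
  refine le_antisymm (iSup_le fun g => ENNReal.div_le_of_le_mul <|
    GNorm_comp_le hT hμ g.2 ha hν hmul) ?_
  have hψf : GNorm μ' a b ψ f ≤ 1 := GNorm_le_one_of_eLpNorm_le fun p hp => (hfψ p hp).le
  calc fundE a b ν c
      = GNorm μ a b ζ (f ∘ T) / 1 := by
        rw [div_one, GNorm_comp_eq_fundE_of_eLpNorm_eq hT hμ hf ha hψ hfψ hν hmul]
    _ ≤ GNorm μ a b ζ (f ∘ T) / GNorm μ' a b ψ f := ENNReal.div_le_div_left hψf _
    _ ≤ _ := le_iSup (fun g : {g : β → ℝ // AEStronglyMeasurable g μ'} =>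
        GNorm μ a b ζ (g.1 ∘ T) / GNorm μ' a b ψ g.1) ⟨f, hf⟩

end ScalingMap

section PiScaling

variable {ι : Type*} [Fintype ι]

theorem pi_smul_measure {α : ι → Type*} [∀ i, MeasurableSpace (α i)] (μ : ∀ i, Measure (α i))
    [∀ i, SigmaFinite (μ i)] {c : ι → ℝ≥0∞} (hc : ∀ i, c i ≠ ∞) :
    Measure.pi (fun i => c i • μ i) = (∏ i, c i) • Measure.pi μ := by
  lift c to ι → ℝ≥0 using hc
  refine Measure.pi_eq (μ := fun i => c i • μ i) fun t _ => ?_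
  simp only [Measure.smul_apply, Measure.pi_pi, ENNReal.smul_def, smul_eq_mul,
    Finset.prod_mul_distrib]

theorem map_pi_smul_addHaar {E : ι → Type*} [∀ i, NormedAddCommGroup (E i)]
    [∀ i, NormedSpace ℝ (E i)] [∀ i, MeasurableSpace (E i)] [∀ i, BorelSpace (E i)]
    [∀ i, FiniteDimensional ℝ (E i)] (μ : ∀ i, Measure (E i)) [∀ i, (μ i).IsAddHaarMeasure]
    {c : ι → ℝ} (hc : ∀ i, c i ≠ 0) :
    (Measure.pi μ).map (fun x i => c i • x i) =
      (∏ i, ENNReal.ofReal |(c i ^ Module.finrank ℝ (E i))⁻¹|) • Measure.pi μ := by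
  have hmap : ∀ i, (μ i).map (c i • ·) =
      ENNReal.ofReal |(c i ^ Module.finrank ℝ (E i))⁻¹| • μ i :=
    fun i => Measure.map_addHaar_smul (μ i) (hc i)
  have : ∀ i, SigmaFinite ((μ i).map (c i • ·)) := fun i =>
    (MeasurableEquiv.smul₀ (c i) (hc i)).sigmaFinite_map
  rw [Measure.pi_map_pi fun i => (measurable_const_smul (c i)).aemeasurable]
  simp_rw [hmap]
  exact pi_smul_measure μ fun _ => ENNReal.ofReal_ne_top

end PiScaling

section BlockScale

variable {k : ℕ} {d : Fin k → ℕ} {s : Fin k → ℝ}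

theorem sPow_nonneg (hs : ∀ r, 0 ≤ s r) (e : Fin k → ℝ) : 0 ≤ sPow s e :=
  Finset.prod_nonneg fun r _ => Real.rpow_nonneg (hs r) (e r)

theorem sPow_add (hs : ∀ r, 0 < s r) (e e' : Fin k → ℝ) :
    sPow s (fun r => e r + e' r) = sPow s e * sPow s e' := by
  simp only [sPow, Real.rpow_add (hs _), Finset.prod_mul_distrib]

theorem ofReal_prod_smul_eq_mul (hs : ∀ r, 0 ≤ s r) {E : Fin k → Type*} [∀ r, SMul ℝ (E r)]
    {θ : Fin k → ℝ} {W : ∀ r, E r → ℝ} (hW : ∀ r y, W r (s r • y) = s r ^ θ r * W r y)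
    (x : ∀ r, E r) :
    ENNReal.ofReal (∏ r, W r (s r • x r)) =
      ENNReal.ofReal (sPow s θ) * ENNReal.ofReal (∏ r, W r (x r)) := by
  rw [← ENNReal.ofReal_mul (sPow_nonneg hs θ)]
  simp only [hW, sPow, Finset.prod_mul_distrib]

/-- The map `x ↦ (x(d(1))/s(1), …, x(d(k))/s(k))` of `X`, so that `dilate s f` is definitionally
`f ∘ blockScale s`. -/
def blockScale (s : Fin k → ℝ) (x : PiX k d) : PiX k d := fun r i => x r i / s r

theorem blockScale_eq_inv_smul (x : PiX k d) : blockScale s x = fun r => (s r)⁻¹ • x r := by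
  ext r i
  exact div_eq_inv_mul _ _

theorem smul_blockScale (hs : ∀ r, s r ≠ 0) (x : PiX k d) :
    (fun r => s r • blockScale s x r) = x := by
  ext r i
  exact mul_div_cancel₀ _ (hs r)

theorem measurableEmbedding_blockScale (hs : ∀ r, s r ≠ 0) :
    MeasurableEmbedding (blockScale s : PiX k d → PiX k d) := by
  rw [funext blockScale_eq_inv_smul]
  exact (MeasurableEquiv.piCongrRight fun r =>
    MeasurableEquiv.smul₀ (s r)⁻¹ (inv_ne_zero (hs r))).measurableEmbedding

theorem measurableSet_orthant : MeasurableSet (orthant k d) := by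
  simp only [orthant, ofPred_forall]
  exact .iInter fun r => .iInter fun i => measurableSet_lt measurable_const (by fun_prop)

theorem blockScale_mem_orthant_iff (hs : ∀ r, 0 < s r) {x : PiX k d} :
    blockScale s x ∈ orthant k d ↔ x ∈ orthant k d :=
  forall₂_congr fun r _ => div_pos_iff_of_pos_right (hs r)

theorem map_blockScale_volume (hs : ∀ r, 0 < s r) :
    (volume : Measure (PiX k d)).map (blockScale s) =
      ENNReal.ofReal (sPow s fun r => d r) • volume := by
  have hfactor : ∀ r, |((s r)⁻¹ ^ d r)⁻¹| = s r ^ (d r : ℝ) := fun r => by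
    rw [inv_pow, inv_inv, abs_of_pos (pow_pos (hs r) _), Real.rpow_natCast]
  rw [funext blockScale_eq_inv_smul, volume_pi,
    map_pi_smul_addHaar _ fun r => inv_ne_zero (hs r).ne']
  simp only [Module.finrank_fin_fun, hfactor, sPow,
    ENNReal.ofReal_prod_of_nonneg fun r _ => Real.rpow_nonneg (hs r).le _]

theorem map_blockScale_volume_restrict_orthant (hs : ∀ r, 0 < s r) :
    (volume.restrict (orthant k d)).map (blockScale s) =
      ENNReal.ofReal (sPow s fun r => d r) • volume.restrict (orthant k d) := by
  have hT := (measurableEmbedding_blockScale (d := d) fun r => (hs r).ne').measurable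
  have hpre : blockScale s ⁻¹' orthant k d = orthant k d :=
    Set.ext fun _ => blockScale_mem_orthant_iff hs
  rw [← Measure.restrict_smul, ← map_blockScale_volume hs,
    Measure.restrict_map hT measurableSet_orthant, hpre]

theorem map_blockScale_withDensity (hs : ∀ r, 0 < s r) {θ : Fin k → ℝ} {w : PiX k d → ℝ≥0∞}
    (hw : ∀ x ∈ orthant k d, w (fun r => s r • x r) = ENNReal.ofReal (sPow s θ) * w x) :
    ((volume.restrict (orthant k d)).withDensity w).map (blockScale s) =
      ENNReal.ofReal (sPow s fun r => d r + θ r) •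
        (volume.restrict (orthant k d)).withDensity w := by
  have hs0 : ∀ r, s r ≠ 0 := fun r => (hs r).ne'
  have hdensity : ∀ᵐ x ∂volume.restrict (orthant k d),
      w x = ENNReal.ofReal (sPow s θ) * w (blockScale s x) := by
    filter_upwards [ae_restrict_mem measurableSet_orthant] with x hx
    rw [← hw _ ((blockScale_mem_orthant_iff hs).2 hx), smul_blockScale hs0]
  rw [map_withDensity_of_map_eq_smul (measurableEmbedding_blockScale hs0)
      (map_blockScale_volume_restrict_orthant hs) ENNReal.ofReal_ne_top hdensity,
    mul_comm, ← ENNReal.ofReal_mul (sPow_nonneg (fun r => (hs r).le) _), ← sPow_add hs]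

theorem dilation_opNorm_eq_general {θ : Fin k → ℝ} {w : PiX k d → ℝ≥0∞} (hs : ∀ r, 0 < s r)
    (hw : ∀ x ∈ orthant k d, w (fun r => s r • x r) = ENNReal.ofReal (sPow s θ) * w x)
    {a : ℝ} {b : ℝ≥0∞} (ha : 0 ≤ a) {ψ ζ ν : ℝ → ℝ} (hψ : ∀ p ∈ expSet a b, 0 < ψ p)
    {f : PiX k d → ℝ}
    (hf : AEStronglyMeasurable f ((volume.restrict (orthant k d)).withDensity w))
    (hfψ : ∀ p ∈ expSet a b, eLpNorm f (ENNReal.ofReal p)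
      ((volume.restrict (orthant k d)).withDensity w) = ENNReal.ofReal (ψ p))
    (hν : ∀ p ∈ expSet a b, 0 < ν p) (hmul : ∀ p ∈ expSet a b, ζ p = ψ p * ν p) :
    dilOpNorm ((volume.restrict (orthant k d)).withDensity w) a b ψ ζ s =
      fundE a b ν (ENNReal.ofReal (sPow s fun r => d r + θ r)) :=
  iSup_GNorm_comp_div_GNorm
    (measurableEmbedding_blockScale fun r => (hs r).ne').measurable.aemeasurable
    (map_blockScale_withDensity hs hw) hf ha hψ hfψ (fun p hp => (hν p hp).le) hmul

end BlockScale

/-- **Theorem 1.1.B.** Let `ψ ∈ Ψ(a,b)` and `ζ, ν ∈ EΨ(a,b)` with `ζ = ψ·ν`.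
Then for every positive vector `s` the operator norm of the dilation operator equals
`‖σ_s‖(G(ψ) → G(ζ)) = φ(G(ν), s^{d+θ})`, where `s^{d+θ} = ∏_r s(r)^{d(r)+θ(r)}`. -/
theorem dilation_opNorm_eq
    (k : ℕ) (d : Fin k → ℕ) (θ : Fin k → ℝ)
    (W : ∀ r : Fin k, (Fin (d r) → ℝ) → ℝ)
    (hWnn : ∀ r y, 0 ≤ W r y)
    (hWcont : ∀ r, ContinuousOn (W r) {y | y ≠ 0})
    (hWnontriv : ∀ r, ∃ y, W r y ≠ 0)
    (hWhom : ∀ (r : Fin k) (lam : ℝ), 0 < lam → ∀ y, W r (lam • y) = lam ^ θ r * W r y)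
    (a : ℝ) (b : ℝ≥0∞) (ha : 1 ≤ a) (hab : ENNReal.ofReal a < b)
    (ψ ζ ν : ℝ → ℝ)
    (hψ : IsPsi (wMeasure k d fun x => ∏ r, W r (x r)) a b ψ)
    (hζ : IsEPsi a b ζ) (hν : IsEPsi a b ν)
    (hmul : ∀ p ∈ expSet a b, ζ p = ψ p * ν p)
    (s : Fin k → ℝ) (hs : ∀ r, 0 < s r) :
    dilOpNorm (wMeasure k d fun x => ∏ r, W r (x r)) a b ψ ζ s =
      fundE a b ν (ENNReal.ofReal (sPow s fun r => (d r : ℝ) + θ r)) := by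
  obtain ⟨-, hψpos, -, f, hf, hfψ⟩ := hψ
  exact dilation_opNorm_eq_general hs
    (fun x _ => ofReal_prod_smul_eq_mul (fun r => (hs r).le) (fun r => hWhom r (s r) (hs r)) x)
    (zero_le_one.trans ha) hψpos hf hfψ (fun p hp => one_pos.trans_le (hν.2.1 p hp)) hmul
end
end
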